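/- Suppose every ŷ₂ ∈ 𝒴₂ lies in the range of g₂ ∘ g₁, and g₂(ŷ₁) lies in the range of g₂ ∘ g₁ for every ŷ₁ ∈ 𝒴₁. Then for every D > 0, with distortion measured at the distillation point Y₂: R_{XY₂}(D;Y₂) = R_{Y₂}(D;Y₂) = R_X(D;Y₂), and moreover the cases where the cut point Y₁ differs from the distillation point are also equivalent: R_{XY₁}(D;Y₂) = R_{Y₁}(D;Y₂) = R_{Y₂}(D;Y₂). -/

import Mathlib

open scoped BigOperators

/-- Joint distribution P(a,b) = p(a)·k(a)(b) induced by a source `p` and a channel `k`,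
as a real number. -/
noncomputable def jointP {A B : Type*} [Fintype A] [Fintype B] (p : PMF A) (k : A → PMF B)
    (a : A) (b : B) : ℝ :=
  (p a * k a b).toReal

/-- Marginal distribution of the second coordinate of the joint induced by `(p, k)`. -/
noncomputable def margSnd {A B : Type*} [Fintype A] [Fintype B] (p : PMF A) (k : A → PMF B)
    (b : B) : ℝ :=
  ∑ a, jointP p k a b

/-- Mutual information I(A;B) = ∑_{a,b} P(a,b)·log(P(a,b)/(P(a)·P(b))) of the joint
induced by `(p, k)`; the convention 0·log 0 = 0 holds automatically in Lean. -/
noncomputable def mutualInfo {A B : Type*} [Fintype A] [Fintype B] (p : PMF A)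
    (k : A → PMF B) : ℝ :=
  ∑ a, ∑ b, jointP p k a b * Real.log (jointP p k a b / ((p a).toReal * margSnd p k b))

/-- Expected distortion E[d(A,B)] under the joint induced by `(p, k)`. -/
noncomputable def expDist {A B : Type*} [Fintype A] [Fintype B] (p : PMF A) (k : A → PMF B)
    (d : A → B → ℝ) : ℝ :=
  ∑ a, ∑ b, jointP p k a b * d a b

/-- Rate-distortion function: infimum of mutual information over all channels `A → PMF B`
meeting the expected-distortion constraint `≤ D`. -/
noncomputable def rate {A B : Type*} [Fintype A] [Fintype B] (p : PMF A) (d : A → B → ℝ)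
    (D : ℝ) : ℝ :=
  sInf { r : ℝ | ∃ k : A → PMF B, expDist p k d ≤ D ∧ r = mutualInfo p k }

/-- Conditional probability P(A = a | B = b) under the joint induced by `(p, k)`. -/
noncomputable def condProb {A B : Type*} [Fintype A] [Fintype B] (p : PMF A) (k : A → PMF B)
    (a : A) (b : B) : ℝ :=
  jointP p k a b / margSnd p k b

section FiberSums

variable {A A' B B' : Type*} [Fintype A] [Fintype A'] [Fintype B] [Fintype B']

theorem mul_log_div_ge {x y c : ℝ} (hx : 0 ≤ x) (hy : 0 ≤ y) (hxy : y = 0 → x = 0)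
    (hc : 0 < c) : x * Real.log c + x - c * y ≤ x * Real.log (x / y) := by
  rcases hx.eq_or_lt with rfl | hx
  · simpa using mul_nonneg hc.le hy
  have hy : 0 < y := hy.lt_of_ne fun h => hx.ne' (hxy h.symm)
  have hlog := Real.log_le_sub_one_of_pos (show 0 < c * y / x by positivity)
  rw [Real.log_div (by positivity) hx.ne', Real.log_mul hc.ne' hy.ne'] at hlog
  rw [Real.log_div hx.ne' hy.ne']
  have hmul := mul_le_mul_of_nonneg_left hlog hx.le
  have hcancel : x * (c * y / x - 1) = c * y - x := by field_simp
  rw [hcancel] at hmul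
  linarith

/-- The log-sum inequality. -/
theorem sum_mul_log_div_le {ι : Type*} (s : Finset ι) (P Q : ι → ℝ) (hP : ∀ i, 0 ≤ P i)
    (hQ : ∀ i, 0 ≤ Q i) (hPQ : ∀ i, Q i = 0 → P i = 0) :
    (∑ i ∈ s, P i) * Real.log ((∑ i ∈ s, P i) / ∑ i ∈ s, Q i)
      ≤ ∑ i ∈ s, P i * Real.log (P i / Q i) := by
  rcases (Finset.sum_nonneg fun i _ => hP i : 0 ≤ ∑ i ∈ s, P i).eq_or_lt with h | h
  · have hz := (Finset.sum_eq_zero_iff_of_nonneg fun i _ => hP i).1 h.symm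
    rw [← h, zero_mul, Finset.sum_eq_zero fun i hi => by rw [hz i hi, zero_mul]]
  have hQs : 0 < ∑ i ∈ s, Q i := by
    refine (Finset.sum_nonneg fun i _ => hQ i).lt_of_ne fun h0 => h.ne' ?_
    have hz := (Finset.sum_eq_zero_iff_of_nonneg fun i _ => hQ i).1 h0.symm
    exact Finset.sum_eq_zero fun i hi => hPQ i (hz i hi)
  have hsum := Finset.sum_le_sum fun i (_ : i ∈ s) =>
    mul_log_div_ge (hP i) (hQ i) (hPQ i) (div_pos h hQs)
  rw [Finset.sum_sub_distrib, Finset.sum_add_distrib, ← Finset.sum_mul, ← Finset.mul_sum,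
    div_mul_cancel₀ _ hQs.ne'] at hsum
  linarith

open Classical in
theorem sum_sum_fiberwise (f : A → A') (h : B → B') (F : A → B → ℝ) :
    ∑ a', ∑ b', ∑ a with f a = a', ∑ b with h b = b', F a b = ∑ a, ∑ b, F a b := by
  rw [← Finset.sum_fiberwise Finset.univ f]
  refine Finset.sum_congr rfl fun a' _ => ?_
  rw [Finset.sum_comm]
  exact Finset.sum_congr rfl fun a _ => Finset.sum_fiberwise Finset.univ h _

end FiberSums

section Channels

variable {A A' B B' : Type*} [Fintype A] [Fintype A'] [Fintype B] [Fintype B']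

theorem PMF.sum_toReal (p : PMF A) : ∑ a, (p a).toReal = 1 := by
  rw [← ENNReal.toReal_sum fun a _ => p.apply_ne_top a, ← tsum_fintype (L := .unconditional A),
    p.tsum_coe, ENNReal.toReal_one]

open Classical in
theorem PMF.toReal_map_apply {C : Type*} (p : PMF A) (f : A → C) (a' : C) :
    ((p.map f) a').toReal = ∑ a with f a = a', (p a).toReal := by
  rw [PMF.map_apply, tsum_fintype, ENNReal.toReal_sum, Finset.sum_filter]
  · refine Finset.sum_congr rfl fun a _ => ?_
    by_cases h : f a = a'
    · simp [h]
    · simp [h, Ne.symm h]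
  · intro a _
    split_ifs
    · exact p.apply_ne_top a
    · simp

theorem PMF.sum_map_mul (p : PMF A) (f : A → A') (F : A' → ℝ) :
    ∑ a', ((p.map f) a').toReal * F a' = ∑ a, (p a).toReal * F (f a) := by
  classical
  rw [← Finset.sum_fiberwise Finset.univ f]
  refine Finset.sum_congr rfl fun a' _ => ?_
  rw [PMF.toReal_map_apply, Finset.sum_mul]
  refine Finset.sum_congr rfl fun a ha => ?_
  rw [(Finset.mem_filter.1 ha).2]

theorem jointP_eq (p : PMF A) (k : A → PMF B) (a : A) (b : B) :
    jointP p k a b = (p a).toReal * (k a b).toReal := ENNReal.toReal_mul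

theorem jointP_nonneg (p : PMF A) (k : A → PMF B) (a : A) (b : B) : 0 ≤ jointP p k a b :=
  ENNReal.toReal_nonneg

theorem margSnd_nonneg (p : PMF A) (k : A → PMF B) (b : B) : 0 ≤ margSnd p k b :=
  Finset.sum_nonneg fun a _ => jointP_nonneg p k a b

theorem sum_jointP (p : PMF A) (k : A → PMF B) (a : A) :
    ∑ b, jointP p k a b = (p a).toReal := by
  simp_rw [jointP_eq, ← Finset.mul_sum, PMF.sum_toReal, mul_one]

theorem sum_margSnd (p : PMF A) (k : A → PMF B) : ∑ b, margSnd p k b = 1 := by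
  simp_rw [margSnd]
  rw [Finset.sum_comm]
  simp_rw [sum_jointP, PMF.sum_toReal]

theorem jointP_eq_zero (p : PMF A) (k : A → PMF B) (a : A) (b : B)
    (h : (p a).toReal * margSnd p k b = 0) : jointP p k a b = 0 := by
  rcases mul_eq_zero.1 h with h | h
  · rw [jointP_eq, h, zero_mul]
  · exact (Finset.sum_eq_zero_iff_of_nonneg fun a _ => jointP_nonneg p k a b).1 h a
      (Finset.mem_univ a)

theorem mutualInfo_nonneg (p : PMF A) (k : A → PMF B) : 0 ≤ mutualInfo p k := by
  have h : ∑ a, ∑ b, (jointP p k a b - (p a).toReal * margSnd p k b) ≤ mutualInfo p k := by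
    refine Finset.sum_le_sum fun a _ => Finset.sum_le_sum fun b _ => ?_
    simpa using mul_log_div_ge (jointP_nonneg p k a b)
      (mul_nonneg ENNReal.toReal_nonneg (margSnd_nonneg p k b)) (jointP_eq_zero p k a b) one_pos
  simpa [Finset.sum_sub_distrib, sum_jointP, ← Finset.mul_sum, sum_margSnd] using h

theorem mutualInfo_eq (p : PMF A) (k : A → PMF B) :
    mutualInfo p k
      = ∑ a, (p a).toReal * ∑ b, (k a b).toReal * Real.log ((k a b).toReal / margSnd p k b) := by
  refine Finset.sum_congr rfl fun a _ => ?_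
  rw [Finset.mul_sum]
  refine Finset.sum_congr rfl fun b _ => ?_
  rw [jointP_eq]
  by_cases h : (p a).toReal = 0
  · simp [h]
  · rw [mul_div_mul_left _ _ h, mul_assoc]

theorem expDist_eq (p : PMF A) (k : A → PMF B) (d : A → B → ℝ) :
    expDist p k d = ∑ a, (p a).toReal * ∑ b, (k a b).toReal * d a b := by
  simp_rw [expDist, jointP_eq, Finset.mul_sum, mul_assoc]

/-- Any joint distribution with first marginal `p` is induced by a channel. -/
theorem exists_channel [Nonempty B] (p : PMF A) (W : A → B → ℝ) (hW : ∀ a b, 0 ≤ W a b)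
    (hsum : ∀ a, ∑ b, W a b = (p a).toReal) :
    ∃ k : A → PMF B, ∀ a b, jointP p k a b = W a b := by
  have key : ∀ a, ∃ q : PMF B, ∀ b, (p a).toReal * (q b).toReal = W a b := by
    intro a
    by_cases h : (p a).toReal = 0
    · refine ⟨PMF.pure (Classical.arbitrary B), fun b => ?_⟩
      rw [h, zero_mul]
      exact ((Finset.sum_eq_zero_iff_of_nonneg fun b _ => hW a b).1 ((hsum a).trans h) b
        (Finset.mem_univ b)).symm
    · have hq : ∀ b, 0 ≤ W a b / (p a).toReal :=
        fun b => div_nonneg (hW a b) ENNReal.toReal_nonneg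
      refine ⟨PMF.ofFintype (fun b => ENNReal.ofReal (W a b / (p a).toReal)) ?_, fun b => ?_⟩
      · rw [← ENNReal.ofReal_sum_of_nonneg fun b _ => hq b, ← Finset.sum_div, hsum, div_self h,
          ENNReal.ofReal_one]
      · rw [PMF.ofFintype_apply, ENNReal.toReal_ofReal (hq b), mul_div_cancel₀ _ h]
  choose k hk using key
  exact ⟨k, fun a b => (jointP_eq p k a b).trans (hk a b)⟩

/-- Data processing: a channel can be pushed forward along maps of both alphabets without
increasing the mutual information or changing the distortion. -/
theorem exists_channel_map (p : PMF A) (f : A → A') (h : B → B') (d : A' → B' → ℝ)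
    (k : A → PMF B) :
    ∃ k' : A' → PMF B', expDist (p.map f) k' d = expDist p k (fun a b => d (f a) (h b)) ∧
      mutualInfo (p.map f) k' ≤ mutualInfo p k := by
  classical
  obtain ⟨a₀, _⟩ := p.support_nonempty
  obtain ⟨b₀, _⟩ := (k a₀).support_nonempty
  have : Nonempty B' := ⟨h b₀⟩
  obtain ⟨k', hk'⟩ := exists_channel (p.map f)
    (fun a' b' => ∑ a with f a = a', ∑ b with h b = b', jointP p k a b)
    (fun a' b' => Finset.sum_nonneg fun a _ => Finset.sum_nonneg fun b _ => jointP_nonneg p k a b)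
    (fun a' => by
      rw [Finset.sum_comm, PMF.toReal_map_apply]
      refine Finset.sum_congr rfl fun a _ => ?_
      exact (Finset.sum_fiberwise Finset.univ h _).trans (sum_jointP p k a))
  have hmarg : ∀ b', margSnd (p.map f) k' b' = ∑ b with h b = b', margSnd p k b := by
    intro b'
    simp_rw [margSnd, hk']
    exact (Finset.sum_fiberwise Finset.univ f _).trans Finset.sum_comm
  refine ⟨k', ?_, ?_⟩
  · rw [expDist, expDist, ← sum_sum_fiberwise f h]
    refine Finset.sum_congr rfl fun a' _ => Finset.sum_congr rfl fun b' _ => ?_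
    rw [hk', Finset.sum_mul]
    refine Finset.sum_congr rfl fun a ha => ?_
    rw [Finset.sum_mul]
    refine Finset.sum_congr rfl fun b hb => ?_
    rw [(Finset.mem_filter.1 ha).2, (Finset.mem_filter.1 hb).2]
  · rw [mutualInfo, mutualInfo, ← sum_sum_fiberwise f h]
    refine Finset.sum_le_sum fun a' _ => Finset.sum_le_sum fun b' _ => ?_
    rw [hk', hmarg, PMF.toReal_map_apply, Finset.sum_mul_sum]
    simp_rw [← Finset.sum_product']
    exact sum_mul_log_div_le _ (fun i : A × B => jointP p k i.1 i.2)
      (fun i => (p i.1).toReal * margSnd p k i.2) (fun i => jointP_nonneg p k i.1 i.2)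
      (fun i => mul_nonneg ENNReal.toReal_nonneg (margSnd_nonneg p k i.2))
      (fun i => jointP_eq_zero p k i.1 i.2)

/-- A channel between images lifts along a map of the inputs and a surjection of the outputs. -/
theorem exists_channel_lift (p : PMF A) (f : A → A') {h : B → B'} (hh : Function.Surjective h)
    (d : A' → B' → ℝ) (k' : A' → PMF B') :
    ∃ k : A → PMF B, expDist p k (fun a b => d (f a) (h b)) = expDist (p.map f) k' d ∧
      mutualInfo p k = mutualInfo (p.map f) k' := by
  obtain ⟨s, hs⟩ := hh.hasRightInverse
  have happ : ∀ a' b', ((k' a').map s (s b')).toReal = (k' a' b').toReal := by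
    classical
    intro a' b'
    rw [PMF.toReal_map_apply, Finset.sum_filter]
    simp [hs.injective.eq_iff]
  have hmarg : ∀ b', margSnd p (fun a => (k' (f a)).map s) (s b') = margSnd (p.map f) k' b' := by
    intro b'
    simp_rw [margSnd, jointP_eq, happ]
    exact (PMF.sum_map_mul p f fun a' => (k' a' b').toReal).symm
  refine ⟨fun a => (k' (f a)).map s, ?_, ?_⟩
  · simp_rw [expDist_eq, PMF.sum_map_mul, hs _]
  · simp_rw [mutualInfo_eq, PMF.sum_map_mul, hmarg, happ]

theorem bddBelow_achievable (p : PMF A) (d : A → B → ℝ) (D : ℝ) :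
    BddBelow {r : ℝ | ∃ k : A → PMF B, expDist p k d ≤ D ∧ r = mutualInfo p k} := by
  refine ⟨0, ?_⟩
  rintro r ⟨k, -, rfl⟩
  exact mutualInfo_nonneg p k

/-- If the distortion depends on source and reproduction only through `f` and a surjection `h`,
then source and reproduction may be replaced by their images. -/
theorem rate_comp_eq_rate_map (p : PMF A) (f : A → A') {h : B → B'}
    (hh : Function.Surjective h) (d : A' → B' → ℝ) (D : ℝ) :
    rate p (fun a b => d (f a) (h b)) D = rate (p.map f) d D := by
  have hsub : {r : ℝ | ∃ k' : A' → PMF B', expDist (p.map f) k' d ≤ D ∧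
        r = mutualInfo (p.map f) k'} ⊆
      {r : ℝ | ∃ k : A → PMF B, expDist p k (fun a b => d (f a) (h b)) ≤ D ∧
        r = mutualInfo p k} := by
    rintro r ⟨k', hk', rfl⟩
    obtain ⟨k, hd, hI⟩ := exists_channel_lift p f hh d k'
    exact ⟨k, hd.trans_le hk', hI.symm⟩
  rw [rate, rate]
  rcases Set.eq_empty_or_nonempty {r : ℝ | ∃ k : A → PMF B,
      expDist p k (fun a b => d (f a) (h b)) ≤ D ∧ r = mutualInfo p k} with hempty | hne
  · rw [hempty, Set.subset_eq_empty hsub hempty]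
  have hle : ∀ r, (∃ k : A → PMF B, expDist p k (fun a b => d (f a) (h b)) ≤ D ∧
      r = mutualInfo p k) → ∃ r' ≤ r, ∃ k' : A' → PMF B', expDist (p.map f) k' d ≤ D ∧
        r' = mutualInfo (p.map f) k' := by
    rintro r ⟨k, hk, rfl⟩
    obtain ⟨k', hd, hI⟩ := exists_channel_map p f h d k
    exact ⟨_, hI, k', hd.trans_le hk, rfl⟩
  obtain ⟨r₀, hr₀⟩ := hne
  obtain ⟨r₁, -, hr₁⟩ := hle r₀ hr₀
  refine le_antisymm (csInf_le_csInf (bddBelow_achievable _ _ D) ⟨r₁, hr₁⟩ hsub) ?_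
  refine le_csInf ⟨r₀, hr₀⟩ fun r hr => ?_
  obtain ⟨r', hr', hmem⟩ := hle r hr
  exact (csInf_le (bddBelow_achievable _ _ D) hmem).trans hr'

end Channels

/-- With distortion measured at the distillation point Y₂ = g₂(g₁(X)), if
every ŷ₂ lies in the range of g₂ ∘ g₁ and g₂(ŷ₁) lies in the range of g₂ ∘ g₁ for every
ŷ₁, then for every D > 0:
R_{XY₂}(D;Y₂) = R_{Y₂}(D;Y₂) = R_X(D;Y₂) and
R_{XY₁}(D;Y₂) = R_{Y₁}(D;Y₂) = R_{Y₂}(D;Y₂). -/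
theorem distillation_point_equal_rates
    {𝒳 𝒴₁ 𝒴₂ : Type*} [Fintype 𝒳] [Fintype 𝒴₁] [Fintype 𝒴₂]
    [Nonempty 𝒳] [Nonempty 𝒴₁] [Nonempty 𝒴₂]
    (pX : PMF 𝒳) (g₁ : 𝒳 → 𝒴₁) (g₂ : 𝒴₁ → 𝒴₂)
    (dY₂ : 𝒴₂ → 𝒴₂ → ℝ) (hdY₂ : ∀ y y', 0 ≤ dY₂ y y')
    (hr2 : ∀ yhat₂ : 𝒴₂, yhat₂ ∈ Set.range (fun x => g₂ (g₁ x)))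
    (hr1 : ∀ yhat₁ : 𝒴₁, g₂ yhat₁ ∈ Set.range (fun x => g₂ (g₁ x)))
    (D : ℝ) (hD : 0 < D) :
    (rate pX (fun x yhat₂ => dY₂ (g₂ (g₁ x)) yhat₂) D
        = rate ((pX.map g₁).map g₂) dY₂ D ∧
      rate ((pX.map g₁).map g₂) dY₂ D
        = rate pX (fun x xhat => dY₂ (g₂ (g₁ x)) (g₂ (g₁ xhat))) D) ∧
    (rate pX (fun x yhat₁ => dY₂ (g₂ (g₁ x)) (g₂ yhat₁)) D
        = rate (pX.map g₁) (fun y₁ yhat₁ => dY₂ (g₂ y₁) (g₂ yhat₁)) D ∧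
      rate (pX.map g₁) (fun y₁ yhat₁ => dY₂ (g₂ y₁) (g₂ yhat₁)) D
        = rate ((pX.map g₁).map g₂) dY₂ D) := by
  have hsurj : Function.Surjective fun x => g₂ (g₁ x) := hr2
  have hsurj₂ : Function.Surjective g₂ := fun y => (hr2 y).imp' g₁ fun _ hx => hx
  have hmap : (pX.map g₁).map g₂ = pX.map fun x => g₂ (g₁ x) := PMF.map_comp g₁ pX g₂
  have hXY₂ := rate_comp_eq_rate_map pX (fun x => g₂ (g₁ x)) Function.surjective_id dY₂ D
  have hX := rate_comp_eq_rate_map pX (fun x => g₂ (g₁ x)) hsurj dY₂ D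
  have hXY₁ := rate_comp_eq_rate_map pX (fun x => g₂ (g₁ x)) hsurj₂ dY₂ D
  have hY₁ := rate_comp_eq_rate_map (pX.map g₁) g₂ hsurj₂ dY₂ D
  rw [← hmap] at hXY₂ hX hXY₁
  exact ⟨⟨hXY₂, hX.symm⟩, hXY₁.trans hY₁.symm, hY₁⟩
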